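/- arXiv:1808.01922 — 2 statements merged into one kernel-verified Lean document; each statement's English description precedes it below -/
import Mathlib

section
/- Let A be a semisimple Hopf algebra over a field k with bijective antipode. The maps N ↦ P_N, where P_N is the unique central idempotent of N with ker(ε|_N) = (1 − P_N)N, and P ↦ N_P are mutually inverse bijections between the set of left coideal subalgebras of A and the set of right group-like projections in A. -/
open scoped TensorProduct

noncomputable section

variable (k : Type*) [Field k] {A : Type*} [Ring A] [HopfAlgebra k A]

/-- `P` is a right group-like projection: a nonzero idempotent with
`Δ(P)(1 ⊗ P) = P ⊗ P = (1 ⊗ P)Δ(P)`. -/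
def IsRightGroupLikeProjection (P : A) : Prop :=
  P ≠ 0 ∧ P * P = P ∧
    Coalgebra.comul (R := k) P * ((1 : A) ⊗ₜ[k] P) = P ⊗ₜ[k] P ∧
    ((1 : A) ⊗ₜ[k] P) * Coalgebra.comul (R := k) P = P ⊗ₜ[k] P

/-- `P` is a left group-like projection: a nonzero idempotent with
`Δ(P)(P ⊗ 1) = P ⊗ P = (P ⊗ 1)Δ(P)`. -/
def IsLeftGroupLikeProjection (P : A) : Prop :=
  P ≠ 0 ∧ P * P = P ∧
    Coalgebra.comul (R := k) P * (P ⊗ₜ[k] (1 : A)) = P ⊗ₜ[k] P ∧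
    (P ⊗ₜ[k] (1 : A)) * Coalgebra.comul (R := k) P = P ⊗ₜ[k] P

/-- A two-sided group-like projection. -/
def IsTwoSidedGroupLikeProjection (P : A) : Prop :=
  IsRightGroupLikeProjection k P ∧ IsLeftGroupLikeProjection k P

/-- `N_P^l = {x : (1 ⊗ P)Δ(x) = x ⊗ P}`. -/
def NPlSet (P : A) : Set A :=
  {x : A | ((1 : A) ⊗ₜ[k] P) * Coalgebra.comul (R := k) x = x ⊗ₜ[k] P}

/-- `N_P^r = {x : Δ(x)(1 ⊗ P) = x ⊗ P}`. -/
def NPrSet (P : A) : Set A :=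
  {x : A | Coalgebra.comul (R := k) x * ((1 : A) ⊗ₜ[k] P) = x ⊗ₜ[k] P}

/-- `N_P = N_P^l ∩ N_P^r`. -/
def NPSet (P : A) : Set A := NPlSet k P ∩ NPrSet k P

/-- `V_P = {(μ ⊗ id)(Δ(P)) : μ ∈ A*}`, the smallest left coideal containing `P`. -/
def VPSet (P : A) : Set A :=
  {x : A | ∃ μ : A →ₗ[k] k,
    x = TensorProduct.lid k A ((TensorProduct.map μ LinearMap.id) (Coalgebra.comul (R := k) P))}

/-- A submodule `N ⊆ A` is a left coideal if `Δ(N) ⊆ A ⊗ N`. -/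
def IsLeftCoideal (N : Submodule k A) : Prop :=
  ∀ x ∈ N, Coalgebra.comul (R := k) x ∈
    LinearMap.range (TensorProduct.map (LinearMap.id : A →ₗ[k] A) N.subtype)

/-- A subalgebra `N ⊆ A` is a left coideal subalgebra if `Δ(N) ⊆ A ⊗ N`. -/
def IsLeftCoidealSubalgebra (N : Subalgebra k A) : Prop :=
  IsLeftCoideal k (Subalgebra.toSubmodule N)

universe u v

section HomRank
variable {k : Type v} [Field k] {R : Type u} [Ring R] [Algebra k R]

theorem finite_linearMap_of_isScalarTower (M V : Type u) [AddCommGroup M] [Module k M] [Module R M]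
    [IsScalarTower k R M] [AddCommGroup V] [Module k V] [Module R V] [IsScalarTower k R V]
    [Module.Finite k M] [Module.Finite k V] : Module.Finite k (M →ₗ[R] V) :=
  Module.Finite.of_injective (LinearMap.restrictScalarsₗ k R M V k)
    (LinearMap.restrictScalars_injective k)

theorem exists_surjective_of_finrank_hom_le_of_isSemisimpleModule
    (X Y : Type u) [AddCommGroup X] [Module k X] [Module R X]
    [IsScalarTower k R X] [AddCommGroup Y] [Module k Y] [Module R Y] [IsScalarTower k R Y]
    [Module.Finite k X] [Module.Finite k Y] [IsSemisimpleModule R X] [IsSemisimpleModule R Y]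
    (h : ∀ (V : Type u) [AddCommGroup V] [Module k V] [Module R V] [IsScalarTower k R V]
      [Module.Finite k V] [IsSimpleModule R V],
      Module.finrank k (X →ₗ[R] V) ≤ Module.finrank k (Y →ₗ[R] V)) :
    ∃ g : Y →ₗ[R] X, Function.Surjective g := by
  induction hn : Module.finrank k X using Nat.strong_induction_on generalizing X Y with
  | _ n ih =>
  rcases subsingleton_or_nontrivial X with hX | hX
  · exact ⟨0, fun x => ⟨0, Subsingleton.elim _ _⟩⟩
  obtain ⟨S, hS⟩ := IsSemisimpleModule.exists_simple_submodule R X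
  obtain ⟨X', hX'⟩ := exists_isCompl S
  have hfin (Z : Type u) [AddCommGroup Z] [Module k Z] [Module R Z] [IsScalarTower k R Z]
      [Module.Finite k Z] (V : Type u) [AddCommGroup V] [Module k V] [Module R V]
      [IsScalarTower k R V] [Module.Finite k V] : Module.Finite k (Z →ₗ[R] V) :=
    finite_linearMap_of_isScalarTower Z V
  have hsub (Z : Type u) [AddCommGroup Z] [Module k Z] [Module R Z] [IsScalarTower k R Z]
      [Module.Finite k Z] (T : Submodule R Z) : Module.Finite k T :=
    Module.Finite.of_injective (T.subtype.restrictScalars k) T.injective_subtype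
  have := IsSimpleModule.nontrivial R S
  have := hsub X S
  have := hsub X X'
  have eX := Submodule.prodEquivOfIsCompl S X' hX'
  have homX (V : Type u) [AddCommGroup V] [Module k V] [Module R V] [IsScalarTower k R V]
      [Module.Finite k V] : Module.finrank k (X →ₗ[R] V) =
        Module.finrank k (S →ₗ[R] V) + Module.finrank k (X' →ₗ[R] V) := by
    rw [← Module.finrank_prod]
    exact ((LinearMap.coprodEquiv k).trans (LinearEquiv.congrLeft V k eX)).finrank_eq.symm
  obtain ⟨f, hf⟩ : ∃ f : Y →ₗ[R] S, f ≠ 0 := by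
    have : 0 < Module.finrank k (Y →ₗ[R] S) := by
      refine lt_of_lt_of_le ?_ (h S)
      rw [homX S]
      have : Nontrivial (S →ₗ[R] S) := ⟨LinearMap.id, 0, fun hh => by
        obtain ⟨x, hx⟩ := exists_ne (0 : S)
        exact hx (LinearMap.congr_fun hh x)⟩
      have := Module.finrank_pos (R := k) (M := S →ₗ[R] S)
      omega
    have := Module.nontrivial_of_finrank_pos this
    exact exists_ne 0
  have hfs : Function.Surjective f := LinearMap.surjective_of_ne_zero hf
  obtain ⟨Y', hY'⟩ := exists_isCompl (LinearMap.ker f)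
  have eS : Y' ≃ₗ[R] S := (Submodule.quotientEquivOfIsCompl _ _ hY').symm.trans
    (f.quotKerEquivOfSurjective hfs)
  have eY := Submodule.prodEquivOfIsCompl _ _ hY'
  have homY (V : Type u) [AddCommGroup V] [Module k V] [Module R V] [IsScalarTower k R V]
      [Module.Finite k V] : Module.finrank k (Y →ₗ[R] V) =
        Module.finrank k (S →ₗ[R] V) + Module.finrank k (LinearMap.ker f →ₗ[R] V) := by
    rw [add_comm, ← (LinearEquiv.congrLeft V k eS).finrank_eq, ← Module.finrank_prod]
    exact ((LinearMap.coprodEquiv k).trans (LinearEquiv.congrLeft V k eY)).finrank_eq.symm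
  have := hsub Y (LinearMap.ker f)
  have hlt : Module.finrank k X' < n := by
    have h1 := (eX.restrictScalars k).finrank_eq
    rw [Module.finrank_prod] at h1
    have := Module.finrank_pos (R := k) (M := S)
    omega
  obtain ⟨g, hg⟩ := ih _ hlt X' (LinearMap.ker f) (fun V => by
    intros
    have := h V
    rw [homX V, homY V] at this
    omega) rfl
  refine ⟨eX.toLinearMap ∘ₗ (LinearMap.prodMap eS.toLinearMap g) ∘ₗ
    (LinearEquiv.prodComm R _ _).toLinearMap ∘ₗ eY.symm.toLinearMap, ?_⟩
  simp only [LinearMap.coe_comp, LinearEquiv.coe_coe]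
  refine eX.surjective.comp (Function.Surjective.comp ?_
    ((LinearEquiv.prodComm R _ _).surjective.comp eY.symm.surjective))
  exact Function.Surjective.prodMap eS.surjective hg

theorem exists_surjective_of_finrank_hom_le
    (M F : Type u) [AddCommGroup M] [Module k M] [Module R M]
    [IsScalarTower k R M] [AddCommGroup F] [Module k F] [Module R F] [IsScalarTower k R F]
    [Module.Finite k M] [Module.Finite k F] [Module.Projective R F]
    (h : ∀ (V : Type u) [AddCommGroup V] [Module k V] [Module R V] [IsScalarTower k R V]
      [Module.Finite k V] [IsSimpleModule R V],
      Module.finrank k (M →ₗ[R] V) ≤ Module.finrank k (F →ₗ[R] V)) :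
    ∃ p : F →ₗ[R] M, Function.Surjective p := by
  have : IsArtinian R M := isArtinian_of_tower k inferInstance
  have : IsArtinian R F := isArtinian_of_tower k inferInstance
  have : Module.Finite R M := Module.Finite.of_restrictScalars_finite k R M
  have : IsSemisimpleModule R (M ⧸ Module.jacobson R M) :=
    IsArtinian.isSemisimpleModule_iff_jacobson _ _ |>.2 (Module.jacobson_quotient_jacobson R M)
  have : IsSemisimpleModule R (F ⧸ Module.jacobson R F) :=
    IsArtinian.isSemisimpleModule_iff_jacobson _ _ |>.2 (Module.jacobson_quotient_jacobson R F)
  obtain ⟨g, hg⟩ := exists_surjective_of_finrank_hom_le_of_isSemisimpleModule (k := k) (R := R)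
    (M ⧸ Module.jacobson R M) (F ⧸ Module.jacobson R F) (by
      intro V _ _ _ _ _ _
      have := finite_linearMap_of_isScalarTower (k := k) (R := R) M V
      have := finite_linearMap_of_isScalarTower (k := k) (R := R) (F ⧸ Module.jacobson R F) V
      calc Module.finrank k (M ⧸ Module.jacobson R M →ₗ[R] V)
        _ ≤ Module.finrank k (M →ₗ[R] V) :=
          LinearMap.finrank_le_finrank_of_injective
            (f := LinearMap.lcomp k V (Module.jacobson R M).mkQ)
            fun a b hab => Submodule.linearMap_qext _ hab
        _ ≤ Module.finrank k (F →ₗ[R] V) := h V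
        _ ≤ _ := by
          refine LinearMap.finrank_le_finrank_of_surjective
            (f := LinearMap.lcomp k V (Module.jacobson R F).mkQ) fun f => ?_
          have hker : Module.jacobson R F ≤ LinearMap.ker f := by
            refine (Module.le_comap_jacobson f).trans ?_
            rw [IsSemisimpleModule.jacobson_eq_bot]
            exact le_rfl
          exact ⟨(Module.jacobson R F).liftQ f hker, Submodule.liftQ_mkQ _ _ hker⟩)
  obtain ⟨p, hp⟩ := Module.projective_lifting_property (Module.jacobson R M).mkQ
    (g ∘ₗ (Module.jacobson R F).mkQ) (Submodule.mkQ_surjective _)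
  refine ⟨p, LinearMap.range_eq_top.1 ?_⟩
  by_contra hne
  obtain ⟨m, hm, hle⟩ := (eq_top_or_exists_le_coatom (LinearMap.range p)).resolve_left hne
  refine hm.1 (eq_top_iff.2 fun x _ => ?_)
  obtain ⟨y, hy⟩ := hg.comp (Submodule.mkQ_surjective _) ((Module.jacobson R M).mkQ x)
  have h1 : (Module.jacobson R M).mkQ (p y) = (Module.jacobson R M).mkQ x := by
    rw [← hy]; exact LinearMap.congr_fun hp y
  have h2 : x - p y ∈ m := (sInf_le hm : Module.jacobson R M ≤ m)
    ((Submodule.Quotient.eq _).1 h1.symm)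
  simpa using m.add_mem h2 (hle ⟨y, rfl⟩)

end HomRank

section Sweedler
open Coalgebra HopfAlgebra
variable {k : Type v} [Field k] {A : Type u} [Ring A] [HopfAlgebra k A]

theorem rTensor_assoc_symm_lTensor_comul {g : A ⊗[k] A →ₗ[k] A}
    (hg : ∀ a, g (comul a) = algebraMap k A (counit a)) (x : A) :
    g.rTensor A ((TensorProduct.assoc k A A A).symm (comul.lTensor A (comul (R := k) x))) =
      1 ⊗ₜ x := by
  have : g ∘ₗ comul = Algebra.linearMap k A ∘ₗ counit := LinearMap.ext hg
  rw [coassoc_symm_apply, ← LinearMap.comp_apply, ← LinearMap.rTensor_comp, this,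
    LinearMap.rTensor_comp, LinearMap.comp_apply, rTensor_counit_comul]
  simp

theorem lTensor_assoc_rTensor_comul {g : A ⊗[k] A →ₗ[k] A}
    (hg : ∀ a, g (comul a) = algebraMap k A (counit a)) (x : A) :
    g.lTensor A (TensorProduct.assoc k A A A (comul.rTensor A (comul (R := k) x))) =
      x ⊗ₜ 1 := by
  have : g ∘ₗ comul = Algebra.linearMap k A ∘ₗ counit := LinearMap.ext hg
  rw [coassoc_apply, ← LinearMap.comp_apply, ← LinearMap.lTensor_comp, this,
    LinearMap.lTensor_comp, LinearMap.comp_apply, lTensor_counit_comul]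
  simp

theorem sum_antipode_tmul_one_mul_comul {ι : Type*} {s : Finset ι} {a c : ι → A} {x : A}
    (h : comul (R := k) x = ∑ i ∈ s, a i ⊗ₜ[k] c i) :
    ∑ i ∈ s, (antipode k (a i) ⊗ₜ[k] 1) * comul (c i) = 1 ⊗ₜ[k] x := by
  rw [← rTensor_assoc_symm_lTensor_comul (g := LinearMap.mul' k A ∘ₗ (antipode k).rTensor A)
    (mul_antipode_rTensor_comul_apply (R := k)) x, h]
  simp only [map_sum, LinearMap.lTensor_tmul]
  refine Finset.sum_congr rfl fun i _ => ?_
  induction comul (R := k) (c i) with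
  | zero => simp
  | tmul x y => simp
  | add x y hx hy => simp only [mul_add, hx, hy, TensorProduct.tmul_add, map_add]

variable (k A) in
/-- The inverse of a bijective antipode. -/
def antipodeInv (hS : Function.Bijective (antipode k : A →ₗ[k] A)) : A →ₗ[k] A :=
  (LinearEquiv.ofBijective (antipode k) hS).symm.toLinearMap

variable (hS : Function.Bijective (antipode k : A →ₗ[k] A))

theorem antipode_antipodeInv (a : A) : antipode k (antipodeInv k A hS a) = a :=
  (LinearEquiv.ofBijective (antipode k) hS).apply_symm_apply a

/-- The linear map `a ⊗ b ↦ b S⁻¹(a)`. -/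
def flipMulAntipodeInv : A ⊗[k] A →ₗ[k] A :=
  TensorProduct.lift ((LinearMap.mul k A).flip ∘ₗ antipodeInv k A hS)

@[simp]
theorem flipMulAntipodeInv_tmul (a b : A) :
    flipMulAntipodeInv hS (a ⊗ₜ b) = b * antipodeInv k A hS a := rfl

theorem flipMulAntipodeInv_comul (a : A) :
    flipMulAntipodeInv hS (comul a) = algebraMap k A (counit a) := by
  apply hS.1
  have h : ∀ z : A ⊗[k] A, antipode k (flipMulAntipodeInv hS z) =
      LinearMap.mul' k A ((antipode k).lTensor A z) := fun z => by
    induction z with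
    | zero => simp
    | tmul x y => simp [antipode_mul_antidistrib, antipode_antipodeInv]
    | add x y hx hy => simp only [hx, hy, map_add]
  rw [h, mul_antipode_lTensor_comul_apply, Algebra.algebraMap_eq_smul_one, map_smul, antipode_one]

theorem sum_comul_mul_antipodeInv_tmul_one {ι : Type*} {s : Finset ι} {a c : ι → A} {x : A}
    (h : comul (R := k) x = ∑ i ∈ s, a i ⊗ₜ[k] c i) :
    ∑ i ∈ s, comul (c i) * (antipodeInv k A hS (a i) ⊗ₜ[k] 1) = 1 ⊗ₜ[k] x := by
  rw [← rTensor_assoc_symm_lTensor_comul (flipMulAntipodeInv_comul hS) x, h]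
  simp only [map_sum, LinearMap.lTensor_tmul]
  refine Finset.sum_congr rfl fun i _ => ?_
  induction comul (R := k) (c i) with
  | zero => simp
  | tmul x y => simp
  | add x y hx hy => simp only [add_mul, hx, hy, TensorProduct.tmul_add, map_add]

theorem sum_mul_antipodeInv {ι : Type*} {s : Finset ι} {a c : ι → A} {x : A}
    (h : comul (R := k) x = ∑ i ∈ s, a i ⊗ₜ[k] c i) :
    ∑ i ∈ s, c i * antipodeInv k A hS (a i) = algebraMap k A (counit x) := by
  rw [← flipMulAntipodeInv_comul hS, h]
  simp

theorem sum_counit_smul_left {ι : Type*} {s : Finset ι} {a c : ι → A} {x : A}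
    (h : comul (R := k) x = ∑ i ∈ s, a i ⊗ₜ[k] c i) :
    ∑ i ∈ s, counit (R := k) (c i) • a i = x := by
  have := congr(TensorProduct.rid k A $(lTensor_counit_comul (R := k) x))
  rw [h] at this
  simpa using this

end Sweedler

section BasisTensor
variable {k : Type v} [Field k] {A M : Type*} [AddCommGroup A] [Module k A] [AddCommGroup M]
  [Module k M] {ι : Type*} (b : Module.Basis ι k A)

theorem eq_zero_of_sum_basis_tmul_eq_zero {s : Finset ι} {m : ι → M}
    (h : ∑ i ∈ s, b i ⊗ₜ[k] m i = 0) {i : ι} (hi : i ∈ s) : m i = 0 := by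
  classical
  have := congr(TensorProduct.lid k M ((b.coord i).rTensor M $h))
  simpa [Finsupp.single_apply, hi, ite_smul] using this

theorem mem_of_sum_basis_tmul_mem {N : Submodule k M} {s : Finset ι} {m : ι → M}
    (h : ∑ i ∈ s, b i ⊗ₜ[k] m i ∈
      LinearMap.range (TensorProduct.map (LinearMap.id : A →ₗ[k] A) N.subtype))
    {i : ι} (hi : i ∈ s) : m i ∈ N := by
  obtain ⟨t, ht⟩ := h
  rw [← N.ker_mkQ, LinearMap.mem_ker]
  refine eq_zero_of_sum_basis_tmul_eq_zero b (s := s) (m := fun i => N.mkQ (m i)) ?_ hi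
  have h0 : ∑ i ∈ s, b i ⊗ₜ[k] N.mkQ (m i) = N.mkQ.lTensor A (∑ i ∈ s, b i ⊗ₜ[k] m i) := by simp
  have h1 : N.mkQ ∘ₗ N.subtype = 0 := by ext; simp
  rw [h0, ← ht, ← LinearMap.lTensor_def, ← LinearMap.comp_apply, ← LinearMap.lTensor_comp, h1]
  simp

end BasisTensor

theorem IsLeftCoideal.exists_comul_eq_sum {k : Type v} [Field k] {A : Type u} [Ring A]
    [HopfAlgebra k A] {N : Submodule k A} (hN : IsLeftCoideal k N) {ι : Type*}
    (b : Module.Basis ι k A) {x : A} (hx : x ∈ N) :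
    ∃ c : ι →₀ N, Coalgebra.comul (R := k) x = ∑ i ∈ c.support, b i ⊗ₜ[k] (c i : A) := by
  obtain ⟨t, ht⟩ := hN x hx
  obtain ⟨c, rfl⟩ := TensorProduct.eq_repr_basis_left b t
  refine ⟨c, ?_⟩
  rw [← ht]
  simp [Finsupp.sum]

section Twist
open Coalgebra HopfAlgebra
variable {k : Type v} [Field k] {A : Type u} [Ring A] [HopfAlgebra k A] {N : Subalgebra k A}
  {V : Type u} [AddCommGroup V] [Module k V] [Module N V] [IsScalarTower k N V]

/-- For `a ∈ A` and an `N`-linear map `h : A → V`, the map `m ↦ m₁ a ⊗ h(m₂)`. -/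
def comulTwist (a : A) : (A →ₗ[N] V) →ₗ[k] A →ₗ[k] A ⊗[k] V where
  toFun h := TensorProduct.map (LinearMap.mulRight k a) (h.restrictScalars k) ∘ₗ comul
  map_add' h h' := by
    ext m
    simp [TensorProduct.map_add_right]
  map_smul' c h := by
    ext m
    simp [TensorProduct.map_smul_right]

theorem comulTwist_apply (a : A) (h : A →ₗ[N] V) (m : A) :
    comulTwist a h m =
      TensorProduct.map (LinearMap.mulRight k a) (h.restrictScalars k) (comul (R := k) m) := rfl

theorem sum_antipode_comulTwist {ι : Type*} {s : Finset ι} {d c : ι → A} {m : A}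
    (hm : comul (R := k) m = ∑ i ∈ s, d i ⊗ₜ[k] c i) (a : A) (h : A →ₗ[N] V) :
    ∑ i ∈ s, (LinearMap.mulLeft k (antipode k (d i))).rTensor V (comulTwist a h (c i)) =
      a ⊗ₜ[k] h m := by
  have := congr(TensorProduct.map (LinearMap.mulRight k a) (h.restrictScalars k)
    $(sum_antipode_tmul_one_mul_comul hm))
  simp only [map_sum, TensorProduct.map_tmul, LinearMap.mulRight_apply, one_mul,
    LinearMap.restrictScalars_apply] at this
  rw [← this]
  refine Finset.sum_congr rfl fun i _ => ?_
  rw [comulTwist_apply]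
  induction comul (R := k) (c i) with
  | zero => simp
  | tmul x y => simp [mul_assoc]
  | add x y hx hy => simp only [mul_add, hx, hy, map_add]

theorem comulTwist_mul {ι : Type*} {s : Finset ι} {d : ι → A} {c : ι → N} {n : N}
    (hn : comul (R := k) (n : A) = ∑ i ∈ s, d i ⊗ₜ[k] (c i : A)) (a : A) (h : A →ₗ[N] V) (m : A) :
    comulTwist a h (n • m) = ∑ i ∈ s, TensorProduct.map (LinearMap.mulLeft k (d i))
      (Algebra.lsmul k k V (c i)) (comulTwist a h m) := by
  rw [comulTwist_apply, comulTwist_apply, Subalgebra.smul_def, smul_eq_mul, Bialgebra.comul_mul, hn,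
    Finset.sum_mul, map_sum]
  refine Finset.sum_congr rfl fun i _ => ?_
  induction comul (R := k) m with
  | zero => simp
  | tmul x y =>
    have hy : h (c i * y) = c i • h y := map_smul h (c i) y
    simp [mul_assoc, hy]
  | add x y hx hy => simp only [mul_add, hx, hy, map_add]

end Twist

section Freeness
open Coalgebra HopfAlgebra
variable {k : Type v} [Field k] {A : Type u} [Ring A] [HopfAlgebra k A] {N : Subalgebra k A}
  {V : Type u} [AddCommGroup V] [Module k V] [Module N V] [IsScalarTower k N V]

theorem eq_zero_of_comul_annihilates (hS : Function.Bijective (antipode k : A →ₗ[k] A))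
    {ι : Type*} {s : Finset ι} {d : ι → A} {c : ι → N} {n : A}
    (hn : comul (R := k) n = ∑ i ∈ s, d i ⊗ₜ[k] (c i : A)) (hc : ∀ i ∈ s, ∀ v : V, c i • v = 0)
    {h : A →ₗ[N] V} (hh : h ≠ 0) : n = 0 := by
  obtain ⟨z, hz⟩ : ∃ z, h z ≠ 0 := by
    by_contra! hz
    exact hh (LinearMap.ext hz)
  have h0 : n ⊗ₜ[k] h z = 0 := by
    have := congr((h.restrictScalars k ∘ₗ LinearMap.mulRight k z).lTensor A
      $(lTensor_assoc_rTensor_comul (flipMulAntipodeInv_comul hS) n))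
    simp only [LinearMap.lTensor_tmul, LinearMap.comp_apply, LinearMap.mulRight_apply, one_mul,
      LinearMap.restrictScalars_apply] at this
    rw [← this, hn]
    simp only [map_sum, LinearMap.rTensor_tmul]
    refine Finset.sum_eq_zero fun i hi => ?_
    induction comul (R := k) (d i) with
    | zero => simp
    | tmul x y =>
      have h1 : h (c i * antipodeInv k A hS y * z) = 0 := by
        rw [mul_assoc, ← smul_eq_mul, ← Subalgebra.smul_def, map_smul, hc i hi]
      simp [h1]
    | add x y hx hy => simp only [TensorProduct.add_tmul, hx, hy, map_add, add_zero]
  refine (Module.forall_dual_apply_eq_zero_iff k n).1 fun φ => ?_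
  have h1 := congr(TensorProduct.lid k V (φ.rTensor V $h0))
  simpa [hz] using h1

theorem injective_of_finrank_hom_eq (hS : Function.Bijective (antipode k : A →ₗ[k] A))
    (hN : IsLeftCoidealSubalgebra k N) [Module.Finite k A] [Module.Finite k V] {r s : ℕ}
    {p : (Fin r → N) →ₗ[N] (Fin s → A)} (hp : Function.Surjective p)
    (hdim : s * Module.finrank k (A →ₗ[N] V) = r * Module.finrank k V)
    {h : A →ₗ[N] V} (hh : h ≠ 0) : Function.Injective p := by
  classical
  let b := Module.finBasis k A
  have hrep (n : N) : ∃ c : Fin (Module.finrank k A) →₀ N,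
      comul (R := k) (n : A) = ∑ i ∈ c.support, b i ⊗ₜ[k] (c i : A) :=
    IsLeftCoideal.exists_comul_eq_sum hN b n.2
  choose c hc using hrep
  let Θ (H : Fin s → Fin (Module.finrank k A) → (A →ₗ[N] V)) : (Fin s → A) →ₗ[k] A ⊗[k] V :=
    ∑ i, (∑ l, comulTwist (b l) (H i l)) ∘ₗ LinearMap.proj i
  let ρ (n : N) : A ⊗[k] V →ₗ[k] A ⊗[k] V := ∑ l ∈ (c n).support,
    TensorProduct.map (LinearMap.mulLeft k (b l)) (Algebra.lsmul k k V (c n l))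
  have hΘ (H n m) : Θ H (n • m) = ρ n (Θ H m) := by
    simp only [Θ, ρ, LinearMap.sum_apply, LinearMap.comp_apply, LinearMap.proj_apply,
      Pi.smul_apply, map_sum, comulTwist_mul (hc n)]
  have hΘp (H f) : Θ H (p f) = ∑ j, ρ (f j) (Θ H (p (Pi.single j 1))) := by
    conv_lhs => rw [pi_eq_sum_univ' f]
    simp only [map_sum, map_smul, hΘ]
  let Ψ : (Fin s → Fin (Module.finrank k A) → (A →ₗ[N] V)) →ₗ[k] (Fin r → A ⊗[k] V) :=
    { toFun := fun H j => Θ H (p (Pi.single j 1))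
      map_add' := fun H H' => by
        ext j
        simp [Θ, Finset.sum_add_distrib]
      map_smul' := fun a H => by
        ext j
        simp [Θ, Finset.smul_sum] }
  have hinj : Function.Injective Ψ := by
    rw [injective_iff_map_eq_zero]
    intro H hH
    have hH0 (m) : Θ H m = 0 := by
      obtain ⟨f, rfl⟩ := hp m
      rw [hΘp]
      refine Finset.sum_eq_zero fun j _ => ?_
      rw [show Θ H (p (Pi.single j 1)) = 0 from congr_fun hH j, map_zero]
    have hH1 (i) (m : A) : ∑ l, comulTwist (b l) (H i l) m = 0 := by
      rw [← hH0 (Pi.single i m)]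
      simp only [Θ, LinearMap.sum_apply, LinearMap.comp_apply, LinearMap.proj_apply]
      rw [Finset.sum_eq_single i (fun i' _ hi' => by simp [hi']) (by simp)]
      simp
    ext i l m
    refine eq_zero_of_sum_basis_tmul_eq_zero b (s := Finset.univ) (m := fun l => H i l m) ?_
      (Finset.mem_univ l)
    let R := Coalgebra.Repr.arbitrary k m
    simp_rw [← sum_antipode_comulTwist R.eq.symm]
    rw [Finset.sum_comm]
    refine Finset.sum_eq_zero fun t _ => ?_
    rw [← map_sum, hH1, map_zero]
  have hfin := finite_linearMap_of_isScalarTower (k := k) (R := N) A V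
  have hsurj : Function.Surjective Ψ := by
    refine (LinearMap.injective_iff_surjective_of_finrank_eq_finrank ?_).1 hinj
    simp only [Module.finrank_pi_fintype, Module.finrank_tensorProduct, Finset.sum_const,
      Finset.card_univ, Fintype.card_fin, smul_eq_mul]
    rw [mul_left_comm, hdim, mul_left_comm]
  rw [injective_iff_map_eq_zero]
  intro f hf
  ext j
  refine eq_zero_of_comul_annihilates hS (hc (f j)) (fun l hl v => ?_) hh
  obtain ⟨H, hH⟩ := hsurj (Pi.single j (1 ⊗ₜ v))
  have h0 : ρ (f j) (1 ⊗ₜ v) = 0 := by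
    have h1 := hΘp H f
    rw [hf, map_zero, Finset.sum_eq_single j] at h1
    · rw [h1, ← show Ψ H j = Θ H (p (Pi.single j 1)) from rfl, hH, Pi.single_eq_same]
    · intro j' _ hj'
      rw [← show Ψ H j' = Θ H (p (Pi.single j' 1)) from rfl, hH, Pi.single_eq_of_ne hj', map_zero]
    · simp
  refine eq_zero_of_sum_basis_tmul_eq_zero b (m := fun l => c (f j) l • v) ?_ hl
  simpa [ρ] using h0

theorem exists_linearEquiv_pi (hS : Function.Bijective (antipode k : A →ₗ[k] A))
    (hN : IsLeftCoidealSubalgebra k N) [Module.Finite k A] :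
    ∃ s r : ℕ, 0 < s ∧ Nonempty ((Fin s → A) ≃ₗ[N] (Fin r → N)) := by
  have hA : Nontrivial A := (Bialgebra.counitAlgHom k A).toRingHom.domain_nontrivial
  have hNfin : Module.Finite k N := inferInstanceAs (Module.Finite k (Subalgebra.toSubmodule N))
  let T : Set (ℕ × ℕ) := {q | ∃ (V : Type u) (_ : AddCommGroup V) (_ : Module k V) (_ : Module N V)
    (_ : IsScalarTower k N V) (_ : Module.Finite k V) (_ : IsSimpleModule N V),
    q = (Module.finrank k (A →ₗ[N] V), Module.finrank k V)}
  have hTfin : T.Finite := by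
    refine ((Set.finite_Iic (Module.finrank k A * Module.finrank k N)).prod
      (Set.finite_Iic (Module.finrank k N))).subset ?_
    rintro _ ⟨V, _, _, _, _, _, _, rfl⟩
    have hV : Module.finrank k V ≤ Module.finrank k N := by
      have := IsSimpleModule.nontrivial N V
      obtain ⟨v, hv⟩ := exists_ne (0 : V)
      exact LinearMap.finrank_le_finrank_of_surjective
        (f := (LinearMap.toSpanSingleton N V v).restrictScalars k)
        (IsSimpleModule.toSpanSingleton_surjective N hv)
    refine ⟨?_, hV⟩
    calc Module.finrank k (A →ₗ[N] V)
      _ ≤ Module.finrank k (A →ₗ[k] V) := LinearMap.finrank_le_finrank_of_injective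
        (f := LinearMap.restrictScalarsₗ k N A V k) (LinearMap.restrictScalars_injective k)
      _ = Module.finrank k A * Module.finrank k V := Module.finrank_linearMap k k A V
      _ ≤ _ := Nat.mul_le_mul_left _ hV
  have hTne : T.Nonempty := by
    obtain ⟨m, hm⟩ := Ideal.exists_maximal N
    have : IsSimpleModule N (N ⧸ m) := isSimpleModule_iff_isCoatom.2 hm.1
    exact ⟨_, N ⧸ m, inferInstance, inferInstance, inferInstance, inferInstance, inferInstance,
      this, rfl⟩
  obtain ⟨_, ⟨V, _, _, _, _, _, _, rfl⟩, hmax⟩ :=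
    Set.exists_max_image T (fun q => (q.1 : ℚ) / q.2) hTfin hTne
  have hpos (W : Type u) [AddCommGroup W] [Module k W] [Module N W] [Module.Finite k W]
      [IsSimpleModule N W] : 0 < Module.finrank k W := by
    have := IsSimpleModule.nontrivial N W
    exact Module.finrank_pos
  obtain ⟨p, hp⟩ := exists_surjective_of_finrank_hom_le (k := k) (R := N)
    (Fin (Module.finrank k V) → A) (Fin (Module.finrank k (A →ₗ[N] V)) → N) (by
      intro W _ _ _ _ _ _
      have := finite_linearMap_of_isScalarTower (k := k) (R := N) A W
      rw [← (LinearMap.lsum N (fun _ : Fin (Module.finrank k V) => A) k (M := W)).finrank_eq,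
        ← (LinearMap.lsum N (fun _ : Fin (Module.finrank k (A →ₗ[N] V)) => N) k (M := W)).finrank_eq,
        Module.finrank_pi_fintype, Module.finrank_pi_fintype,
        (LinearMap.ringLmapEquivSelf N k W).finrank_eq]
      simp only [Finset.sum_const, Finset.card_univ, Fintype.card_fin, smul_eq_mul]
      have hW := hmax _ ⟨W, _, _, _, ‹_›, ‹_›, ‹_›, rfl⟩
      have h1 := hpos V
      have h2 := hpos W
      simp only at hW
      rw [div_le_div_iff₀ (by exact_mod_cast h2) (by exact_mod_cast h1)] at hW
      rw [mul_comm]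
      exact_mod_cast hW)
  have : NeZero (Module.finrank k V) := ⟨(hpos V).ne'⟩
  obtain ⟨h, hh⟩ : ∃ h : A →ₗ[N] V, h ≠ 0 := by
    by_contra! hall
    have : Subsingleton (A →ₗ[N] V) := ⟨fun a b => (hall a).trans (hall b).symm⟩
    have h0 : Module.finrank k (A →ₗ[N] V) = 0 := Module.finrank_zero_of_subsingleton
    have : IsEmpty (Fin (Module.finrank k (A →ₗ[N] V))) := by rw [h0]; infer_instance
    have := hp.subsingleton
    exact not_subsingleton (Fin (Module.finrank k V) → A) this
  exact ⟨_, _, hpos V, ⟨(LinearEquiv.ofBijective p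
    ⟨injective_of_finrank_hom_eq hS hN hp (mul_comm _ _) hh, hp⟩).symm⟩⟩

theorem exists_left_integral (hS : Function.Bijective (antipode k : A →ₗ[k] A))
    (hN : IsLeftCoidealSubalgebra k N) [Module.Finite k A] {e : A}
    (he : ∀ a, a * e = counit (R := k) a • e) (he1 : counit (R := k) e = 1) :
    ∃ P ∈ N, counit (R := k) P = 1 ∧ ∀ n ∈ N, n * P = counit (R := k) n • P := by
  obtain ⟨s, r, hs, ⟨q⟩⟩ := exists_linearEquiv_pi hS hN
  let i₀ : Fin s := ⟨0, hs⟩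
  let f := q (Pi.single i₀ e)
  have hf (n : N) : n • f = counit (R := k) (n : A) • f := by
    have h1 : n • (Pi.single i₀ e : Fin s → A) =
        algebraMap k N (counit (R := k) (n : A)) • Pi.single i₀ e := by
      rw [← Pi.single_smul, ← Pi.single_smul]
      congr 1
      rw [Subalgebra.smul_def, smul_eq_mul, he, algebraMap_smul]
    rw [← map_smul, h1, map_smul, algebraMap_smul]
  obtain ⟨j, hj⟩ : ∃ j, counit (R := k) (f j : A) ≠ 0 := by
    by_contra! h0
    have h1 : Pi.single i₀ e = ∑ j, f j • q.symm (Pi.single j 1) := by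
      rw [← q.symm_apply_apply (Pi.single i₀ e)]
      conv_lhs => rw [show q (Pi.single i₀ e) = f from rfl, pi_eq_sum_univ' f]
      simp only [map_sum, map_smul]
    have h2 := congr(counit (R := k) ($h1 i₀))
    rw [Pi.single_eq_same, he1, Finset.sum_apply, map_sum] at h2
    refine one_ne_zero (h2.trans (Finset.sum_eq_zero fun j _ => ?_))
    rw [Pi.smul_apply, Subalgebra.smul_def, smul_eq_mul, Bialgebra.counit_mul, h0, zero_mul]
  refine ⟨(counit (R := k) (f j : A))⁻¹ • (f j : A), N.smul_mem (f j).2 _, by simp [hj], ?_⟩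
  intro n hn
  have h3 := congr(($(congr_fun (hf ⟨n, hn⟩) j) : A))
  simp only [Pi.smul_apply, smul_eq_mul, Subalgebra.coe_mul, Subalgebra.coe_smul] at h3
  rw [mul_smul_comm, h3, smul_comm]

end Freeness

section Semisimple
open Coalgebra HopfAlgebra
variable {k : Type v} [Field k] {A : Type u} [Ring A]

theorem exists_left_integral_of_isSemisimpleRing [Bialgebra k A] [IsSemisimpleRing A] :
    ∃ e : A, (∀ a, a * e = counit (R := k) a • e) ∧ counit (R := k) e = 1 := by
  let I : Ideal A := RingHom.ker (Bialgebra.counitAlgHom k A)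
  have hI (x : A) : x ∈ I ↔ counit (R := k) x = 0 := by
    simp [I, RingHom.mem_ker]
  obtain ⟨J, hIJ⟩ := exists_isCompl I
  obtain ⟨i, hi, e, he, h1⟩ := Submodule.mem_sup.1
    (hIJ.sup_eq_top ▸ Submodule.mem_top (x := (1 : A)))
  refine ⟨e, fun a => ?_, ?_⟩
  · have hJ : (a - algebraMap k A (counit a)) * e ∈ J := J.smul_mem _ he
    have hI' : (a - algebraMap k A (counit a)) * e ∈ I := by
      rw [hI, Bialgebra.counit_mul, map_sub, Bialgebra.counit_algebraMap]
      simp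
    have := Submodule.disjoint_def.1 hIJ.disjoint _ hI' hJ
    rwa [sub_mul, sub_eq_zero, ← Algebra.smul_def] at this
  · have := congr(counit (R := k) $h1)
    rwa [map_add, (hI i).1 hi, zero_add, Bialgebra.counit_one] at this

variable [HopfAlgebra k A]

theorem one_tmul_mul_comul_of_left_integral {e : A} (he : ∀ a, a * e = counit (R := k) a • e)
    (x : A) : (1 ⊗ₜ[k] x) * comul e = (antipode k x ⊗ₜ[k] 1) * comul (R := k) e := by
  obtain ⟨c, hc⟩ := TensorProduct.eq_repr_basis_left (Module.Basis.ofVectorSpace k A)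
    (comul (R := k) x)
  rw [← sum_antipode_tmul_one_mul_comul hc.symm, Finset.sum_mul]
  conv_rhs => rw [← sum_counit_smul_left hc.symm]
  simp only [mul_assoc, ← Bialgebra.comul_mul, he, map_sum, map_smul, mul_smul_comm,
    TensorProduct.sum_tmul, Finset.sum_mul, ← TensorProduct.smul_tmul', smul_mul_assoc]

theorem finite_of_left_integral (hS : Function.Bijective (antipode k : A →ₗ[k] A)) {e : A}
    (he : ∀ a, a * e = counit (R := k) a • e) (he1 : counit (R := k) e = 1) :
    Module.Finite k A := by
  classical
  let b := Module.Basis.ofVectorSpace k A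
  obtain ⟨q, hq⟩ := TensorProduct.eq_repr_basis_left b (comul (R := k) e)
  rw [Finsupp.sum] at hq
  have hmul (x : A) (l) (hl : l ∈ q.support) :
      x * q l ∈ Submodule.span k (q '' q.support) := by
    have := congr(TensorProduct.lid k A ((b.coord l).rTensor A
      $(one_tmul_mul_comul_of_left_integral he x)))
    rw [← hq, Finset.mul_sum, Finset.mul_sum] at this
    simp only [Algebra.TensorProduct.tmul_mul_tmul, one_mul, map_sum, LinearMap.rTensor_tmul,
      TensorProduct.lid_tmul, Module.Basis.coord_apply, Module.Basis.repr_self,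
      Finsupp.single_apply, ite_smul, one_smul, zero_smul, Finset.sum_ite_eq', hl, if_true] at this
    rw [this]
    exact Submodule.sum_mem _ fun m hm => Submodule.smul_mem _ _
      (Submodule.subset_span ⟨m, hm, rfl⟩)
  have h1 := sum_mul_antipodeInv hS hq.symm
  rw [he1, map_one] at h1
  let T : Submodule k A := ⨆ l : q.support,
    (Submodule.span k (q '' q.support)).map (LinearMap.mulRight k (antipodeInv k A hS (b l)))
  have hfg : (Submodule.span k (q '' (q.support : Set _))).FG :=
    Submodule.fg_span (q.support.finite_toSet.image q)
  have hT : T.FG := Submodule.fg_iSup _ fun l => hfg.map _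
  suffices h : T = ⊤ from ⟨h ▸ hT⟩
  refine eq_top_iff.2 fun x _ => ?_
  rw [← mul_one x, ← h1, Finset.mul_sum]
  refine Submodule.sum_mem _ fun l hl => ?_
  rw [← mul_assoc]
  exact Submodule.mem_iSup_of_mem (⟨l, hl⟩ : q.support) ⟨_, hmul x l hl, rfl⟩

end Semisimple

section Opposite
open Coalgebra HopfAlgebra MulOpposite
variable {k : Type v} [Field k] {A : Type u} [Ring A] [HopfAlgebra k A]

theorem comul_op (x : A) : comul (R := k) (op x) =
    (Algebra.TensorProduct.opAlgEquiv k k A A).symm (op (comul (R := k) x)) := rfl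

theorem counit_op (x : A) : counit (R := k) (op x) = counit (R := k) x := rfl

/-- The opposite bialgebra, with the same comultiplication. -/
@[reducible]
def bialgebraOp : Bialgebra k Aᵐᵒᵖ :=
  Bialgebra.mk' k Aᵐᵒᵖ (by rw [← op_one, counit_op, Bialgebra.counit_one])
    (fun {a b} => by
      induction a with | _ a
      induction b with | _ b
      rw [← op_mul, counit_op, counit_op, counit_op, Bialgebra.counit_mul, mul_comm])
    (by rw [← op_one, comul_op, Bialgebra.comul_one, op_one, map_one])
    (fun {a b} => by
      induction a with | _ a
      induction b with | _ b
      rw [← op_mul, comul_op, comul_op, comul_op, Bialgebra.comul_mul, op_mul, map_mul])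

theorem sum_antipodeInv_mul (hS : Function.Bijective (antipode k : A →ₗ[k] A))
    {ι : Type*} {s : Finset ι} {a c : ι → A} {x : A}
    (h : comul (R := k) x = ∑ i ∈ s, a i ⊗ₜ[k] c i) :
    ∑ i ∈ s, antipodeInv k A hS (c i) * a i = algebraMap k A (counit x) := by
  apply hS.1
  have := mul_antipode_rTensor_comul_apply (R := k) x
  rw [h] at this
  simpa [antipode_mul_antidistrib, antipode_antipodeInv, Algebra.algebraMap_eq_smul_one] using this

/-- The opposite Hopf algebra of a Hopf algebra with bijective antipode, whose antipode is the
inverse antipode. -/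
@[reducible]
def hopfAlgebraOp (hS : Function.Bijective (antipode k : A →ₗ[k] A)) :
    HopfAlgebra k Aᵐᵒᵖ where
  __ := bialgebraOp (k := k) (A := A)
  antipode := (opLinearEquiv k).toLinearMap ∘ₗ antipodeInv k A hS ∘ₗ
    (opLinearEquiv k).symm.toLinearMap
  mul_antipode_rTensor_comul := by
    refine LinearMap.ext fun x => ?_
    induction x with | _ x
    obtain ⟨c, hc⟩ := TensorProduct.eq_repr_basis_left (Module.Basis.ofVectorSpace k A)
      (comul (R := k) x)
    have := congr(op $(sum_mul_antipodeInv hS hc.symm))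
    simpa [MulOpposite.comul_def, MulOpposite.counit_def, ← hc, Finsupp.sum] using this
  mul_antipode_lTensor_comul := by
    refine LinearMap.ext fun x => ?_
    induction x with | _ x
    obtain ⟨c, hc⟩ := TensorProduct.eq_repr_basis_left (Module.Basis.ofVectorSpace k A)
      (comul (R := k) x)
    have := congr(op $(sum_antipodeInv_mul hS hc.symm))
    simpa [MulOpposite.comul_def, MulOpposite.counit_def, ← hc, Finsupp.sum] using this

theorem bijective_antipode_op (hS : Function.Bijective (antipode k : A →ₗ[k] A)) :
    letI := hopfAlgebraOp hS
    Function.Bijective (antipode k : Aᵐᵒᵖ →ₗ[k] Aᵐᵒᵖ) :=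
  ((opLinearEquiv k).symm.trans ((LinearEquiv.ofBijective (antipode k) hS).symm.trans
    (opLinearEquiv k))).bijective

theorem IsLeftCoidealSubalgebra.op (hS : Function.Bijective (antipode k : A →ₗ[k] A))
    {N : Subalgebra k A} (hN : IsLeftCoidealSubalgebra k N) :
    letI := hopfAlgebraOp hS
    IsLeftCoidealSubalgebra k N.op := by
  intro x hx
  obtain ⟨t, ht⟩ := hN x.unop hx
  let g : N →ₗ[k] (Subalgebra.toSubmodule N.op) :=
    ((opLinearEquiv k).toLinearMap ∘ₗ N.val.toLinearMap).codRestrict _ fun n => n.2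
  refine ⟨TensorProduct.map (opLinearEquiv k).toLinearMap g t, ?_⟩
  change _ = TensorProduct.map (opLinearEquiv k).toLinearMap (opLinearEquiv k).toLinearMap
    (comul (R := k) x.unop)
  rw [← ht]
  rw [TensorProduct.map_map, TensorProduct.map_map]
  rfl

theorem exists_right_integral (hS : Function.Bijective (antipode k : A →ₗ[k] A))
    {N : Subalgebra k A} (hN : IsLeftCoidealSubalgebra k N) [Module.Finite k A]
    [IsSemisimpleRing A] :
    ∃ P ∈ N, counit (R := k) P = 1 ∧ ∀ n ∈ N, P * n = counit (R := k) n • P := by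
  let := hopfAlgebraOp hS
  obtain ⟨e, he, he1⟩ := exists_left_integral_of_isSemisimpleRing (k := k) (A := Aᵐᵒᵖ)
  obtain ⟨P, hP, hP1, h⟩ := exists_left_integral (bijective_antipode_op hS) (hN.op hS) he he1
  exact ⟨P.unop, hP, hP1, fun n hn => op_injective (h (op n) hn)⟩

end Opposite

section TwoSided
open Coalgebra HopfAlgebra
variable {k : Type v} [Field k] {A : Type u} [Ring A] [HopfAlgebra k A] {N : Subalgebra k A}

variable (k) in
/-- `P` is a two-sided integral of the subalgebra `N`, lies in `N` and has counit one. -/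
structure IsNormalizedIntegral (N : Subalgebra k A) (P : A) : Prop where
  mem : P ∈ N
  counit_eq_one : counit (R := k) P = 1
  mul_left : ∀ n ∈ N, n * P = counit (R := k) n • P
  mul_right : ∀ n ∈ N, P * n = counit (R := k) n • P

theorem IsNormalizedIntegral.unique {P Q : A} (hP : IsNormalizedIntegral k N P)
    (hQ : IsNormalizedIntegral k N Q) : P = Q := by
  have h1 := hP.mul_left Q hQ.mem
  rw [hQ.mul_right P hP.mem, hP.counit_eq_one, hQ.counit_eq_one, one_smul, one_smul] at h1
  exact h1.symm

theorem finite_of_isSemisimpleRing [IsSemisimpleRing A]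
    (hS : Function.Bijective (antipode k : A →ₗ[k] A)) : Module.Finite k A :=
  let ⟨_, he, he1⟩ := exists_left_integral_of_isSemisimpleRing (k := k) (A := A)
  finite_of_left_integral hS he he1

theorem exists_isNormalizedIntegral [IsSemisimpleRing A]
    (hS : Function.Bijective (antipode k : A →ₗ[k] A)) (hN : IsLeftCoidealSubalgebra k N) :
    ∃ P, IsNormalizedIntegral k N P := by
  obtain ⟨e, he, he1⟩ := exists_left_integral_of_isSemisimpleRing (k := k) (A := A)
  have := finite_of_isSemisimpleRing hS
  obtain ⟨P, hP, hP1, hPl⟩ := exists_left_integral hS hN he he1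
  obtain ⟨Q, hQ, hQ1, hQr⟩ := exists_right_integral hS hN
  have hPQ : P = Q := by
    have := hPl Q hQ
    rwa [hQr P hP, hP1, hQ1, one_smul, one_smul, eq_comm] at this
  exact ⟨P, hP, hP1, hPl, hPQ ▸ hQr⟩

theorem IsNormalizedIntegral.subset_NPSet {P : A} (hN : IsLeftCoidealSubalgebra k N)
    (hP : IsNormalizedIntegral k N P) : (N : Set A) ⊆ NPSet k P := by
  intro x hx
  obtain ⟨c, hc⟩ : ∃ c : _ →₀ N, comul (R := k) x = _ :=
    IsLeftCoideal.exists_comul_eq_sum hN (Module.Basis.ofVectorSpace k A) hx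
  have hx' := sum_counit_smul_left hc
  constructor
  · change _ = _
    conv_rhs => rw [← hx']
    rw [hc, Finset.mul_sum, TensorProduct.sum_tmul]
    refine Finset.sum_congr rfl fun i _ => ?_
    rw [Algebra.TensorProduct.tmul_mul_tmul, one_mul, hP.mul_right _ (c i).2,
      TensorProduct.smul_tmul]
  · change _ = _
    conv_rhs => rw [← hx']
    rw [hc, Finset.sum_mul, TensorProduct.sum_tmul]
    refine Finset.sum_congr rfl fun i _ => ?_
    rw [Algebra.TensorProduct.tmul_mul_tmul, mul_one, hP.mul_left _ (c i).2,
      TensorProduct.smul_tmul]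

theorem IsNormalizedIntegral.isRightGroupLikeProjection {P : A}
    (hN : IsLeftCoidealSubalgebra k N) (hP : IsNormalizedIntegral k N P) :
    IsRightGroupLikeProjection k P := by
  refine ⟨?_, ?_, (hP.subset_NPSet hN hP.mem).2, (hP.subset_NPSet hN hP.mem).1⟩
  · rintro rfl
    simpa using hP.counit_eq_one
  · rw [hP.mul_left P hP.mem, hP.counit_eq_one, one_smul]

variable (k) in
/-- The left coideal subalgebra `N_P`. -/
def NPSubalgebra (P : A) : Subalgebra k A where
  carrier := NPSet k P
  mul_mem' {x y} hx hy := by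
    obtain ⟨hx1, hx2⟩ := hx
    obtain ⟨hy1, hy2⟩ := hy
    change _ = _ at hx1 hx2 hy1 hy2
    constructor
    · change _ = _
      rw [Bialgebra.comul_mul, ← mul_assoc, hx1, ← mul_one x, ← one_mul P,
        ← Algebra.TensorProduct.tmul_mul_tmul, mul_assoc, hy1]
      simp
    · change _ = _
      have hyP : y ⊗ₜ[k] P = (1 ⊗ₜ P) * (y ⊗ₜ 1) := by simp
      rw [Bialgebra.comul_mul, mul_assoc, hy2, hyP, ← mul_assoc, hx2]
      simp
  add_mem' {x y} hx hy := by
    obtain ⟨hx1, hx2⟩ := hx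
    obtain ⟨hy1, hy2⟩ := hy
    change _ = _ at hx1 hx2 hy1 hy2
    constructor
    · change _ = _
      rw [map_add, mul_add, hx1, hy1, TensorProduct.add_tmul]
    · change _ = _
      rw [map_add, add_mul, hx2, hy2, TensorProduct.add_tmul]
  algebraMap_mem' r := by
    constructor <;> change _ = _ <;>
      simp [Algebra.algebraMap_eq_smul_one, TensorProduct.smul_tmul',
        Algebra.TensorProduct.one_def]

theorem lTensor_comul_of_lTensor_comul_eq_tmul {g : A →ₗ[k] A} {P x : A}
    (hx : g.lTensor A (comul (R := k) x) = x ⊗ₜ[k] P) :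
    (g.lTensor A ∘ₗ comul (R := k)).lTensor A (comul (R := k) x) =
      ((TensorProduct.mk k A A).flip P).lTensor A (comul (R := k) x) := by
  have h1 (w : A ⊗[k] A) : (g.lTensor A).lTensor A (TensorProduct.assoc k A A A
      ((comul (R := k)).rTensor A w)) =
      TensorProduct.assoc k A A A ((comul (R := k)).rTensor A (g.lTensor A w)) := by
    induction w with
    | zero => simp
    | add w z hw hz => simp only [map_add, hw, hz]
    | tmul a c =>
      simp only [LinearMap.rTensor_tmul, LinearMap.lTensor_tmul]
      induction comul (R := k) a with
      | zero => simp
      | add w z hw hz => simp only [map_add, TensorProduct.add_tmul, hw, hz]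
      | tmul a b => simp
  rw [LinearMap.lTensor_comp, LinearMap.comp_apply, ← coassoc_apply, h1, hx,
    LinearMap.rTensor_tmul]
  induction comul (R := k) x with
  | zero => simp
  | add w z hw hz => simp only [map_add, TensorProduct.add_tmul, hw, hz]
  | tmul a b => simp

theorem lTensor_mulLeft (P : A) (w : A ⊗[k] A) :
    (LinearMap.mulLeft k P).lTensor A w = (1 ⊗ₜ[k] P) * w := by
  induction w with
  | zero => simp
  | add w z hw hz => simp only [map_add, mul_add, hw, hz]
  | tmul a b => simp

theorem lTensor_mulRight (P : A) (w : A ⊗[k] A) :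
    (LinearMap.mulRight k P).lTensor A w = w * (1 ⊗ₜ[k] P) := by
  induction w with
  | zero => simp
  | add w z hw hz => simp only [map_add, add_mul, hw, hz]
  | tmul a b => simp

theorem mem_NPSubalgebra_iff {P x : A} : x ∈ NPSubalgebra k P ↔
    (LinearMap.mulLeft k P).lTensor A (comul (R := k) x) = x ⊗ₜ[k] P ∧
    (LinearMap.mulRight k P).lTensor A (comul (R := k) x) = x ⊗ₜ[k] P := by
  rw [lTensor_mulLeft, lTensor_mulRight]
  rfl

theorem isLeftCoidealSubalgebra_NPSubalgebra (P : A) :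
    IsLeftCoidealSubalgebra k (NPSubalgebra k P) := by
  intro x hx
  obtain ⟨hl, hr⟩ := mem_NPSubalgebra_iff.1 hx
  let b := Module.Basis.ofVectorSpace k A
  obtain ⟨c, hc⟩ := TensorProduct.eq_repr_basis_left b (comul (R := k) x)
  rw [Finsupp.sum] at hc
  have key {g : A →ₗ[k] A} (hg : g.lTensor A (comul (R := k) x) = x ⊗ₜ[k] P) {i}
      (hi : i ∈ c.support) : g.lTensor A (comul (R := k) (c i)) = c i ⊗ₜ[k] P := by
    have h := lTensor_comul_of_lTensor_comul_eq_tmul hg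
    rw [← hc, ← sub_eq_zero, map_sum, map_sum, ← Finset.sum_sub_distrib] at h
    simp only [LinearMap.lTensor_tmul, ← TensorProduct.tmul_sub] at h
    exact sub_eq_zero.1 (eq_zero_of_sum_basis_tmul_eq_zero b h hi)
  rw [← hc]
  refine Submodule.sum_mem _ fun i hi => ⟨b i ⊗ₜ ⟨c i, ?_⟩, by simp⟩
  exact mem_NPSubalgebra_iff.2 ⟨key hl hi, key hr hi⟩

theorem IsRightGroupLikeProjection.isNormalizedIntegral {P : A}
    (hP : IsRightGroupLikeProjection k P) : IsNormalizedIntegral k (NPSubalgebra k P) P := by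
  obtain ⟨h0, hPP, hPr, hPl⟩ := hP
  have hl : ∀ n ∈ NPSubalgebra k P, n * P = counit (R := k) n • P := fun n hn => by
    have := congr(TensorProduct.lid k A ((counit (R := k)).rTensor A $(hn.2)))
    rw [← lTensor_mulRight, ← LinearMap.comp_apply, LinearMap.rTensor_comp_lTensor,
      ← LinearMap.lTensor_comp_rTensor, LinearMap.comp_apply, rTensor_counit_comul] at this
    simpa using this
  have hr : ∀ n ∈ NPSubalgebra k P, P * n = counit (R := k) n • P := fun n hn => by
    have := congr(TensorProduct.lid k A ((counit (R := k)).rTensor A $(hn.1)))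
    rw [← lTensor_mulLeft, ← LinearMap.comp_apply, LinearMap.rTensor_comp_lTensor,
      ← LinearMap.lTensor_comp_rTensor, LinearMap.comp_apply, rTensor_counit_comul] at this
    simpa using this
  have hmem : P ∈ NPSubalgebra k P := ⟨hPl, hPr⟩
  refine ⟨hmem, ?_, hl, hr⟩
  have := hl P hmem
  rw [hPP] at this
  exact smul_left_injective k h0 (by simpa using this.symm)

theorem comul_mul_one_tmul_of_integral (hS : Function.Bijective (antipode k : A →ₗ[k] A))
    (hN : IsLeftCoidealSubalgebra k N) {P x : A}
    (hP : ∀ n ∈ N, P * n = counit (R := k) n • P) (hx : x ∈ N) :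
    comul (R := k) P * (1 ⊗ₜ[k] x) = comul P * (antipodeInv k A hS x ⊗ₜ[k] 1) := by
  obtain ⟨c, hc⟩ : ∃ c : _ →₀ N, comul (R := k) x = _ :=
    IsLeftCoideal.exists_comul_eq_sum hN (Module.Basis.ofVectorSpace k A) hx
  rw [← sum_comul_mul_antipodeInv_tmul_one hS hc, Finset.mul_sum]
  conv_rhs => rw [← sum_counit_smul_left hc]
  simp only [← mul_assoc, ← Bialgebra.comul_mul, hP _ (c _).2, map_sum, map_smul, mul_smul_comm,
    TensorProduct.sum_tmul, Finset.mul_sum, ← TensorProduct.smul_tmul', smul_mul_assoc]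

theorem exists_sum_mul_eq_one [Module.Finite k A]
    (hS : Function.Bijective (antipode k : A →ₗ[k] A)) {M : Subalgebra k A}
    (hM : IsLeftCoidealSubalgebra k M) {ι : Type*} {s : Finset ι} {q : ι → M} {a : ι → A}
    (h : ∑ i ∈ s, (q i : A) * a i = 1) : ∃ m : ι → M, ∑ i ∈ s, q i * m i = 1 := by
  have hA : Nontrivial A := (Bialgebra.counitAlgHom k A).toRingHom.domain_nontrivial
  obtain ⟨t, r, ht, ⟨φ⟩⟩ := exists_linearEquiv_pi hS hM
  have : NeZero t := ⟨ht.ne'⟩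
  have : Nonempty (Fin r) := by
    by_contra hr
    rw [not_nonempty_iff] at hr
    exact not_subsingleton (Fin t → A) φ.injective.subsingleton
  let j := Classical.arbitrary (Fin r)
  let v := φ.symm (Pi.single j 1)
  refine ⟨fun i => φ (fun l => a i * v l) j, ?_⟩
  have hv : v = ∑ i ∈ s, q i • fun l => a i * v l := by
    ext l
    simp [Subalgebra.smul_def, ← mul_assoc, ← Finset.sum_mul, h]
  have := congr(φ $hv j)
  simp only [v, LinearEquiv.apply_symm_apply, Pi.single_eq_same, map_sum, map_smul,
    Finset.sum_apply, Pi.smul_apply, smul_eq_mul] at this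
  exact this.symm

theorem IsNormalizedIntegral.NPSubalgebra_eq [Module.Finite k A]
    (hS : Function.Bijective (antipode k : A →ₗ[k] A))
    (hN : IsLeftCoidealSubalgebra k N) {P : A} (hP : IsNormalizedIntegral k N P) :
    NPSubalgebra k P = N := by
  refine le_antisymm (fun x hx => ?_) (hP.subset_NPSet hN)
  have hP' := (hP.isRightGroupLikeProjection hN).isNormalizedIntegral
  have hM := isLeftCoidealSubalgebra_NPSubalgebra (k := k) P
  let b := Module.Basis.ofVectorSpace k A
  obtain ⟨q, hq⟩ : ∃ q : _ →₀ N, comul (R := k) P = ∑ i ∈ q.support, b i ⊗ₜ[k] (q i : A) :=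
    IsLeftCoideal.exists_comul_eq_sum hN b hP.mem
  have hmul {y : A} (hy : y ∈ NPSubalgebra k P) {i} (hi : i ∈ q.support) : (q i : A) * y ∈ N := by
    have h := comul_mul_one_tmul_of_integral hS hM hP'.mul_right hy
    rw [hq, Finset.sum_mul, Finset.sum_mul] at h
    simp only [Algebra.TensorProduct.tmul_mul_tmul, mul_one] at h
    refine mem_of_sum_basis_tmul_mem (N := Subalgebra.toSubmodule N) b (s := q.support)
      (m := fun i => (q i : A) * y) ?_ hi
    rw [h]
    exact Submodule.sum_mem _ fun i _ => ⟨_ ⊗ₜ q i, rfl⟩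
  have h1 := sum_mul_antipodeInv hS hq
  rw [hP.counit_eq_one, map_one] at h1
  obtain ⟨m, hm⟩ := exists_sum_mul_eq_one hS hM (s := q.support)
    (q := fun i => ⟨q i, hP.subset_NPSet hN (q i).2⟩) h1
  have hx1 : x = ∑ i ∈ q.support, (q i : A) * (m i * x) := by
    have := congr(($hm : A) * x)
    simpa [Finset.sum_mul, mul_assoc] using this.symm
  rw [hx1]
  exact N.sum_mem fun i hi => hmul (mul_mem (m i).2 hx) hi

theorem IsNormalizedIntegral.counit_eq_zero_iff {P x : A} (hP : IsNormalizedIntegral k N P)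
    (hx : x ∈ N) : counit (R := k) x = 0 ↔ ∃ y ∈ N, x = (1 - P) * y := by
  constructor
  · intro h
    refine ⟨x, hx, ?_⟩
    rw [sub_mul, hP.mul_right x hx, h, zero_smul, sub_zero, one_mul]
  · rintro ⟨y, -, rfl⟩
    rw [Bialgebra.counit_mul, map_sub, hP.counit_eq_one, Bialgebra.counit_one, sub_self, zero_mul]

theorem isNormalizedIntegral_of_counit_eq_zero_iff {Q : A} (hQ : Q ∈ N) (hQQ : Q * Q = Q)
    (hcomm : ∀ x ∈ N, Q * x = x * Q)
    (h : ∀ x ∈ N, counit (R := k) x = 0 ↔ ∃ y ∈ N, x = (1 - Q) * y) :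
    IsNormalizedIntegral k N Q := by
  have hr : ∀ n ∈ N, Q * n = counit (R := k) n • Q := fun n hn => by
    obtain ⟨y, -, hy⟩ := (h (n - algebraMap k A (counit n))
      (sub_mem hn (N.algebraMap_mem _))).1 (by simp)
    have hQy := congr(Q * $hy)
    rwa [← mul_assoc, mul_sub, mul_sub, mul_one, hQQ, sub_self, zero_mul, sub_eq_zero,
      ← Algebra.commutes, ← Algebra.smul_def] at hQy
  refine ⟨hQ, ?_, fun n hn => (hcomm n hn).symm.trans (hr n hn), hr⟩
  have := (h (1 - Q) (sub_mem N.one_mem hQ)).2 ⟨1, N.one_mem, (mul_one _).symm⟩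
  rwa [map_sub, Bialgebra.counit_one, sub_eq_zero, eq_comm] at this

end TwoSided

/-- Theorem: for a semisimple Hopf algebra `A`, the maps `N ↦ P_N` (the unique central
idempotent of `N` with `ker(ε|_N) = (1 - P_N)N`) and `P ↦ N_P` are mutually inverse
bijections between left coideal subalgebras of `A` and right group-like projections in `A`. -/
theorem statement2 [IsSemisimpleRing A]
    (hS : Function.Bijective (HopfAlgebra.antipode (R := k) : A →ₗ[k] A)) :
    ∃ e : {N : Subalgebra k A // IsLeftCoidealSubalgebra k N} ≃
        {P : A // IsRightGroupLikeProjection k P},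
      (∀ N : {N : Subalgebra k A // IsLeftCoidealSubalgebra k N},
        -- `e N` is the unique central idempotent `P_N` of `N` with
        -- `ker(ε|_N) = (1 - P_N)N`
        (e N).1 ∈ N.1 ∧
        (e N).1 * (e N).1 = (e N).1 ∧
        (∀ x ∈ N.1, (e N).1 * x = x * (e N).1) ∧
        (∀ x ∈ N.1, Coalgebra.counit (R := k) x = 0 ↔
          ∃ y ∈ N.1, x = (1 - (e N).1) * y) ∧
        (∀ Q ∈ N.1, Q * Q = Q → (∀ x ∈ N.1, Q * x = x * Q) →
          (∀ x ∈ N.1, Coalgebra.counit (R := k) x = 0 ↔ ∃ y ∈ N.1, x = (1 - Q) * y) →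
          Q = (e N).1)) ∧
      (∀ P : {P : A // IsRightGroupLikeProjection k P},
        (((e.symm P).1 : Subalgebra k A) : Set A) = NPSet k P.1) := by
  have := finite_of_isSemisimpleRing hS
  choose p hp using fun N : {N : Subalgebra k A // IsLeftCoidealSubalgebra k N} =>
    exists_isNormalizedIntegral hS N.2
  refine ⟨⟨fun N => ⟨p N, (hp N).isRightGroupLikeProjection N.2⟩,
    fun P => ⟨NPSubalgebra k P.1, isLeftCoidealSubalgebra_NPSubalgebra P.1⟩,
    fun N => Subtype.ext ((hp N).NPSubalgebra_eq hS N.2),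
    fun P => Subtype.ext ((hp _).unique P.2.isNormalizedIntegral)⟩, fun N => ?_, fun P => rfl⟩
  refine ⟨(hp N).mem, ((hp N).isRightGroupLikeProjection N.2).2.1, fun x hx => ?_,
    fun x hx => (hp N).counit_eq_zero_iff hx, fun Q hQ hQQ hcomm h => ?_⟩
  · exact ((hp N).mul_right x hx).trans ((hp N).mul_left x hx).symm
  · exact (isNormalizedIntegral_of_counit_eq_zero_iff hQ hQQ hcomm h).unique (hp N)
end
end

section
/- Let A be a Hopf algebra over a field k with bijective antipode, and let P ∈ A be a right group-like projection. Then each of the left coideal subalgebras N_P, N_P^l and N_P^r is finite-dimensional over k. -/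
open scoped TensorProduct

noncomputable section

variable (k : Type*) [Field k] {A : Type*} [Ring A] [HopfAlgebra k A]

/-- The twisted multiplication `a ⊗ b ↦ S(a) b`. -/
def antipodeMul : A ⊗[k] A →ₗ[k] A :=
  LinearMap.mul' k A ∘ₗ (HopfAlgebra.antipode k).rTensor A

/-- The twisted multiplication `a ⊗ b ↦ b T(a)`. -/
def mulTwist (T : A →ₗ[k] A) : A ⊗[k] A →ₗ[k] A :=
  LinearMap.mul' k A ∘ₗ (TensorProduct.comm k A A).toLinearMap ∘ₗ T.rTensor A

@[simp]
lemma antipodeMul_tmul (a b : A) :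
    antipodeMul k (a ⊗ₜ[k] b) = HopfAlgebra.antipode k a * b := by
  simp [antipodeMul]

@[simp]
lemma mulTwist_tmul (T : A →ₗ[k] A) (a b : A) :
    mulTwist k T (a ⊗ₜ[k] b) = b * T a := by
  simp [mulTwist]

lemma antipodeMul_comul (x : A) :
    antipodeMul k (Coalgebra.comul (R := k) x) = algebraMap k A (Coalgebra.counit x) := by
  simp [antipodeMul]

/-- If `T` inverts the antipode, then `∑ x₂ T(x₁) = ε(x)`. -/
lemma mulTwist_comul (hS : Function.Injective (HopfAlgebra.antipode k : A →ₗ[k] A))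
    (T : A →ₗ[k] A) (hT : ∀ a, HopfAlgebra.antipode k (T a) = a) (x : A) :
    mulTwist k T (Coalgebra.comul (R := k) x) = algebraMap k A (Coalgebra.counit x) := by
  apply hS
  have h : (HopfAlgebra.antipode k) ∘ₗ mulTwist k T =
      LinearMap.mul' k A ∘ₗ (HopfAlgebra.antipode k).lTensor A := by
    ext a b
    simp [HopfAlgebra.antipode_mul_antidistrib, hT]
  have hx := LinearMap.congr_fun h (Coalgebra.comul (R := k) x)
  simp only [LinearMap.comp_apply, HopfAlgebra.mul_antipode_lTensor_comul_apply] at hx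
  rw [hx, Algebra.algebraMap_eq_smul_one, map_smul, HopfAlgebra.antipode_one]

/-- Collapse the first two legs of a triple tensor along `ψ`. -/
def collapse (ψ : A ⊗[k] A →ₗ[k] A) : A ⊗[k] (A ⊗[k] A) →ₗ[k] A ⊗[k] A :=
  ψ.rTensor A ∘ₗ (TensorProduct.assoc k A A A).symm.toLinearMap

@[simp]
lemma collapse_tmul (ψ : A ⊗[k] A →ₗ[k] A) (a b c : A) :
    collapse k ψ (a ⊗ₜ[k] (b ⊗ₜ[k] c)) = ψ (a ⊗ₜ[k] b) ⊗ₜ[k] c := by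
  simp [collapse]

lemma collapse_lTensor_comul (ψ : A ⊗[k] A →ₗ[k] A)
    (hψ : ∀ x : A, ψ (Coalgebra.comul (R := k) x) = algebraMap k A (Coalgebra.counit x)) (x : A) :
    collapse k ψ (Coalgebra.comul.lTensor A (Coalgebra.comul (R := k) x)) =
      (1 : A) ⊗ₜ[k] x := by
  have h : ψ ∘ₗ Coalgebra.comul = Algebra.linearMap k A ∘ₗ Coalgebra.counit :=
    LinearMap.ext hψ
  simp only [collapse, LinearMap.comp_apply, LinearEquiv.coe_coe, Coalgebra.coassoc_symm_apply]
  rw [← LinearMap.comp_apply, ← LinearMap.rTensor_comp, h, LinearMap.rTensor_comp,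
    LinearMap.comp_apply, Coalgebra.rTensor_counit_comul]
  simp

lemma lTensor_comul_mul (u v : A ⊗[k] A) :
    (Coalgebra.comul (R := k)).lTensor A (u * v) =
      Coalgebra.comul.lTensor A u * Coalgebra.comul.lTensor A v :=
  map_mul (Algebra.TensorProduct.map (AlgHom.id k A) (Bialgebra.comulAlgHom k A)) u v

lemma collapse_antipodeMul_mul (u : A ⊗[k] (A ⊗[k] A)) (w : A ⊗[k] A) :
    collapse k (antipodeMul k) (u * ((1 : A) ⊗ₜ[k] w)) =
      collapse k (antipodeMul k) u * w := by
  induction u with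
  | zero => simp
  | add u v hu hv => simp [add_mul, hu, hv]
  | tmul a z =>
    induction z with
    | zero => simp
    | add u v hu hv =>
      simp only [TensorProduct.tmul_add, add_mul, map_add, hu, hv]
    | tmul b c =>
      induction w with
      | zero => simp
      | add u v hu hv => simp only [TensorProduct.tmul_add, mul_add, map_add, hu, hv]
      | tmul d e => simp [mul_assoc]

lemma collapse_mulTwist_mul (T : A →ₗ[k] A) (u : A ⊗[k] (A ⊗[k] A)) (w : A ⊗[k] A) :
    collapse k (mulTwist k T) (((1 : A) ⊗ₜ[k] w) * u) =
      w * collapse k (mulTwist k T) u := by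
  induction u with
  | zero => simp
  | add u v hu hv => simp [mul_add, hu, hv]
  | tmul a z =>
    induction z with
    | zero => simp
    | add u v hu hv =>
      simp only [TensorProduct.tmul_add, mul_add, map_add, hu, hv]
    | tmul b c =>
      induction w with
      | zero => simp
      | add u v hu hv => simp only [TensorProduct.tmul_add, add_mul, map_add, hu, hv]
      | tmul d e => simp [mul_assoc]

lemma collapse_antipodeMul_tmul (x : A) (w : A ⊗[k] A) :
    collapse k (antipodeMul k) (x ⊗ₜ[k] w) =
      (LinearMap.mulLeft k (HopfAlgebra.antipode k x)).rTensor A w := by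
  induction w with
  | zero => simp
  | add u v hu hv => simp [TensorProduct.tmul_add, hu, hv]
  | tmul b c => simp

lemma collapse_mulTwist_tmul (T : A →ₗ[k] A) (x : A) (w : A ⊗[k] A) :
    collapse k (mulTwist k T) (x ⊗ₜ[k] w) = (LinearMap.mulRight k (T x)).rTensor A w := by
  induction w with
  | zero => simp
  | add u v hu hv => simp [TensorProduct.tmul_add, hu, hv]
  | tmul b c => simp

lemma one_tmul_mul_eq_lTensor (x : A) (w : A ⊗[k] A) :
    ((1 : A) ⊗ₜ[k] x) * w = (LinearMap.mulLeft k x).lTensor A w := by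
  induction w with
  | zero => simp
  | add u v hu hv => simp [mul_add, hu, hv]
  | tmul b c => simp

lemma mul_one_tmul_eq_lTensor (x : A) (w : A ⊗[k] A) :
    w * ((1 : A) ⊗ₜ[k] x) = (LinearMap.mulRight k x).lTensor A w := by
  induction w with
  | zero => simp
  | add u v hu hv => simp [add_mul, hu, hv]
  | tmul b c => simp

lemma rTensor_comul_eq_of_mem_NPrSet {P x : A} (hx : x ∈ NPrSet k P) :
    (LinearMap.mulLeft k (HopfAlgebra.antipode k x)).rTensor A (Coalgebra.comul (R := k) P) =
      (LinearMap.mulLeft k x).lTensor A (Coalgebra.comul (R := k) P) := by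
  have h := congrArg (fun u ↦ collapse k (antipodeMul k) (Coalgebra.comul.lTensor A u))
    (show _ = _ from hx)
  simp only [lTensor_comul_mul, LinearMap.lTensor_tmul, collapse_antipodeMul_mul,
    collapse_lTensor_comul k _ (antipodeMul_comul k), collapse_antipodeMul_tmul,
    one_tmul_mul_eq_lTensor] at h
  exact h.symm

lemma rTensor_comul_eq_of_mem_NPlSet (T : A →ₗ[k] A)
    (hT : ∀ x : A, mulTwist k T (Coalgebra.comul (R := k) x) =
      algebraMap k A (Coalgebra.counit x)) {P x : A} (hx : x ∈ NPlSet k P) :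
    (LinearMap.mulRight k (T x)).rTensor A (Coalgebra.comul (R := k) P) =
      (LinearMap.mulRight k x).lTensor A (Coalgebra.comul (R := k) P) := by
  have h := congrArg (fun u ↦ collapse k (mulTwist k T) (Coalgebra.comul.lTensor A u))
    (show _ = _ from hx)
  simp only [lTensor_comul_mul, LinearMap.lTensor_tmul, collapse_mulTwist_mul,
    collapse_lTensor_comul k _ hT, collapse_mulTwist_tmul, mul_one_tmul_eq_lTensor] at h
  exact h.symm

/-- The elements `(g ⊗ id)(t)` that are also of the form `(id ⊗ h)(t)` lie in a common
finite-dimensional subspace. -/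
lemma exists_finiteDimensional_of_rTensor_eq_lTensor {V W : Type*} [AddCommGroup V] [Module k V]
    [AddCommGroup W] [Module k W] (t : V ⊗[k] W) :
    ∃ F : Submodule k (V ⊗[k] W), FiniteDimensional k F ∧
      ∀ (g : V →ₗ[k] V) (h : W →ₗ[k] W), g.rTensor W t = h.lTensor V t → h.lTensor V t ∈ F := by
  classical
  let b := Module.Basis.ofVectorSpace k V
  obtain ⟨c, rfl⟩ := TensorProduct.eq_repr_basis_left b t
  refine ⟨Submodule.span k ((fun p : _ × _ ↦ b p.1 ⊗ₜ[k] c p.2) '' ↑(c.support ×ˢ c.support)),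
    FiniteDimensional.span_of_finite k ((Finset.finite_toSet _).image _), fun g h hgh ↦ ?_⟩
  have key : ∀ i ∈ c.support, h (c i) = ∑ j ∈ c.support, b.repr (g (b j)) i • c j := by
    intro i hi
    have := congrArg (fun u ↦ TensorProduct.lid k W ((b.coord i).rTensor W u)) hgh
    simp only [Finsupp.sum, map_sum, LinearMap.rTensor_tmul, LinearMap.lTensor_tmul,
      TensorProduct.lid_tmul, Module.Basis.coord_apply, Module.Basis.repr_self] at this
    rw [this, Finset.sum_eq_single i]
    · simp
    · intro j _ hj
      simp [hj]
    · exact fun h' ↦ absurd hi h'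
  simp only [Finsupp.sum, map_sum, LinearMap.lTensor_tmul]
  refine Submodule.sum_mem _ fun i hi ↦ ?_
  rw [key i hi, TensorProduct.tmul_sum]
  refine Submodule.sum_mem _ fun j hj ↦ ?_
  rw [TensorProduct.tmul_smul]
  exact Submodule.smul_mem _ _ (Submodule.subset_span ⟨(i, j), by simp_all, rfl⟩)

/-- A set is contained in a finite-dimensional space if a linear map `G` recovers each of its
elements `x` from some `(id ⊗ h)(t)` of the form `(g ⊗ id)(t)`. -/
lemma finiteDimensional_span_of_recovers {V W M : Type*} [AddCommGroup V] [Module k V]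
    [AddCommGroup W] [Module k W] [AddCommGroup M] [Module k M] (t : V ⊗[k] W)
    (G : V ⊗[k] W →ₗ[k] M) (s : Set M)
    (hs : ∀ x ∈ s, ∃ (g : V →ₗ[k] V) (h : W →ₗ[k] W),
      g.rTensor W t = h.lTensor V t ∧ G (h.lTensor V t) = x) :
    FiniteDimensional k (Submodule.span k s) := by
  obtain ⟨F, hF, hFt⟩ := exists_finiteDimensional_of_rTensor_eq_lTensor k t
  refine Submodule.finiteDimensional_of_le (S₂ := F.map G) (Submodule.span_le.2 fun x hx ↦ ?_)
  obtain ⟨g, h, hgh, rfl⟩ := hs x hx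
  exact Submodule.mem_map_of_mem (hFt g h hgh)

lemma antipodeMul_lTensor_mulRight (x : A) (w : A ⊗[k] A) :
    antipodeMul k ((LinearMap.mulRight k x).lTensor A w) = antipodeMul k w * x := by
  induction w with
  | zero => simp
  | add u v hu hv => simp [add_mul, hu, hv]
  | tmul b c => simp [mul_assoc]

lemma mulTwist_lTensor_mulLeft (T : A →ₗ[k] A) (x : A) (w : A ⊗[k] A) :
    mulTwist k T ((LinearMap.mulLeft k x).lTensor A w) = x * mulTwist k T w := by
  induction w with
  | zero => simp
  | add u v hu hv => simp [mul_add, hu, hv]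
  | tmul b c => simp [mul_assoc]

lemma IsRightGroupLikeProjection.counit_eq_one {P : A} (hP : IsRightGroupLikeProjection k P) :
    Coalgebra.counit (R := k) P = 1 := by
  obtain ⟨hP0, hPP, hr, -⟩ := hP
  have h := congrArg (fun u ↦ TensorProduct.lid k A (Coalgebra.counit.rTensor A u)) hr
  have hcomm := LinearMap.congr_fun
    ((LinearMap.rTensor_comp_lTensor _ (Coalgebra.counit (R := k)) (LinearMap.mulRight k P)).trans
      (LinearMap.lTensor_comp_rTensor _ _ _).symm) (Coalgebra.comul (R := k) P)
  simp only [LinearMap.comp_apply, Coalgebra.rTensor_counit_comul] at hcomm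
  simp only [mul_one_tmul_eq_lTensor, hcomm, LinearMap.lTensor_tmul, LinearMap.rTensor_tmul,
    LinearMap.mulRight_apply, TensorProduct.lid_tmul, one_smul, hPP] at h
  exact smul_left_injective k hP0 (by simpa using h.symm)

/-- Theorem: for any right group-like projection `P`, the left coideal subalgebras
`N_P`, `N_P^l` and `N_P^r` are finite-dimensional over `k`. -/
theorem statement3
    (hS : Function.Bijective (HopfAlgebra.antipode (R := k) : A →ₗ[k] A))
    (P : A) (hP : IsRightGroupLikeProjection k P) :
    FiniteDimensional k ↥(Submodule.span k (NPSet k P)) ∧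
    FiniteDimensional k ↥(Submodule.span k (NPlSet k P)) ∧
    FiniteDimensional k ↥(Submodule.span k (NPrSet k P)) := by
  obtain ⟨T, hT⟩ : ∃ T : A →ₗ[k] A, ∀ a, HopfAlgebra.antipode k (T a) = a :=
    ⟨(LinearEquiv.ofBijective _ hS).symm.toLinearMap,
      (LinearEquiv.ofBijective _ hS).apply_symm_apply⟩
  have hTc := mulTwist_comul k hS.1 T hT
  have hε := hP.counit_eq_one
  have hl : FiniteDimensional k (Submodule.span k (NPlSet k P)) :=
    finiteDimensional_span_of_recovers k (Coalgebra.comul P) (antipodeMul k) _ fun x hx ↦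
      ⟨_, _, rTensor_comul_eq_of_mem_NPlSet k T hTc hx, by
        rw [antipodeMul_lTensor_mulRight, antipodeMul_comul, hε, map_one, one_mul]⟩
  have hr : FiniteDimensional k (Submodule.span k (NPrSet k P)) :=
    finiteDimensional_span_of_recovers k (Coalgebra.comul P) (mulTwist k T) _ fun x hx ↦
      ⟨_, _, rTensor_comul_eq_of_mem_NPrSet k hx, by
        rw [mulTwist_lTensor_mulLeft, hTc, hε, map_one, mul_one]⟩
  exact ⟨Submodule.finiteDimensional_of_le (Submodule.span_mono Set.inter_subset_left), hl, hr⟩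
end
end
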